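/- arXiv:2108.02420 — 5 statements merged into one kernel-verified Lean document; each statement's English description precedes it below -/
import Mathlib

section
/- (Theorem 1 of the paper.) Let $n_a, n_b$ be natural numbers, let $d$ be a norm on $\mathbb{R}^{n_a}$, and let $F : (\mathbb{R}^{n_a} \times \mathbb{R}^{n_b}) \to \mathbb{R} \to (\mathbb{R}^{n_a} \times \mathbb{R}^{n_b})$ be a time-dependent vector field depending only on the $b$-component of the state, i.e. $F((x_a,x_b),t) = G(x_b,t)$ for some $G$ with $x_b \mapsto (G(x_b,t))_b$ Lipschitz uniformly in $t$ and continuous in $t$. Let $R > 0$. If $x_i, x_j : \mathbb{R} \to \mathbb{R}^{n_a} \times \mathbb{R}^{n_b}$ are solutions of $\dot{x}(t) = F(x(t),t)$ on $[t_0,\infty)$ (the two vehicles applying the same control signal) such that $d\big((x_i(t_0))_a - (x_j(t_0))_a\big) > R$ and $(x_i(t_0))_b = (x_j(t_0))_b$, then $d\big((x_i(t))_a - (x_j(t))_a\big) > R$ for all $t \ge t_0$; i.e. the two vehicles remain outside each other's danger zone for all time. -/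
/-! The `b`-components of the two vehicles solve the same Lipschitz equation with the same initial
value, so they coincide for all later times. The velocity of a vehicle is a function of its
`b`-component and of time, so the two velocities agree and the relative state never changes. -/

open Set
open scoped NNReal

section IntegralCurves

variable {E F : Type*} [NormedAddCommGroup E] [NormedSpace ℝ E]
  [NormedAddCommGroup F] [NormedSpace ℝ F]

theorem isIntegralCurveOn_clm_comp {γ : ℝ → E} {v : ℝ → E → E} {w : ℝ → F → F} {s : Set ℝ}
    (π : E →L[ℝ] F) (hπ : ∀ t ∈ s, π (v t (γ t)) = w t (π (γ t)))
    (hγ : IsIntegralCurveOn γ v s) : IsIntegralCurveOn (fun t ↦ π (γ t)) w s := fun t ht ↦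
  hπ t ht ▸ π.hasFDerivAt.comp_hasDerivWithinAt t (hγ t ht)

theorem eqOn_Ici_of_isIntegralCurveOn {γ δ : ℝ → E} {v : ℝ → E → E} {t₀ : ℝ} {K : ℝ≥0}
    (hv : ∀ t ≥ t₀, LipschitzWith K (v t)) (hγ : IsIntegralCurveOn γ v (Ici t₀))
    (hδ : IsIntegralCurveOn δ v (Ici t₀)) (h₀ : γ t₀ = δ t₀) : EqOn γ δ (Ici t₀) := by
  intro T hT
  have hasDeriv_right {η : ℝ → E} (hη : IsIntegralCurveOn η v (Ici t₀)) :
      ∀ t ∈ Ico t₀ T, HasDerivWithinAt η (v t (η t)) (Ici t) t :=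
    fun t ht ↦ (hη t ht.1).mono (Ici_subset_Ici.2 ht.1)
  exact ODE_solution_unique_of_mem_Icc_right (s := fun _ ↦ univ)
    (fun t ht ↦ (hv t ht.1).lipschitzOnWith)
    (hγ.continuousOn.mono Icc_subset_Ici_self) (hasDeriv_right hγ) (fun _ _ ↦ mem_univ _)
    (hδ.continuousOn.mono Icc_subset_Ici_self) (hasDeriv_right hδ) (fun _ _ ↦ mem_univ _)
    h₀ (right_mem_Icc.2 hT)

theorem sub_eq_sub_of_isIntegralCurveOn {γ δ : ℝ → E} {v w : ℝ → E → E} {s : Set ℝ}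
    (hs : Convex ℝ s) (hγ : IsIntegralCurveOn γ v s) (hδ : IsIntegralCurveOn δ w s)
    (hvel : ∀ t ∈ s, v t (γ t) = w t (δ t)) {t₀ t : ℝ} (ht₀ : t₀ ∈ s) (ht : t ∈ s) :
    γ t - δ t = γ t₀ - δ t₀ := by
  have hderiv : ∀ r ∈ s, HasDerivWithinAt (γ - δ) 0 s r := fun r hr ↦
    sub_eq_zero.2 (hvel r hr) ▸ (hγ r hr).sub (hδ r hr)
  have hbound := hs.norm_image_sub_le_of_norm_hasDerivWithin_le hderiv
    (fun _ _ ↦ norm_zero.le) ht₀ ht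
  rwa [zero_mul, norm_le_zero_iff, sub_eq_zero] at hbound

theorem sub_eq_sub_of_isIntegralCurveOn_factor {γ δ : ℝ → E} {g : ℝ → F → E} {t₀ t : ℝ} {K : ℝ≥0}
    (π : E →L[ℝ] F) (hg : ∀ t ≥ t₀, LipschitzWith K fun y ↦ π (g t y))
    (hγ : IsIntegralCurveOn γ (fun t x ↦ g t (π x)) (Ici t₀))
    (hδ : IsIntegralCurveOn δ (fun t x ↦ g t (π x)) (Ici t₀))
    (h₀ : π (γ t₀) = π (δ t₀)) (ht : t₀ ≤ t) : γ t - δ t = γ t₀ - δ t₀ := by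
  have hπ : EqOn (fun t ↦ π (γ t)) (fun t ↦ π (δ t)) (Ici t₀) :=
    eqOn_Ici_of_isIntegralCurveOn hg (isIntegralCurveOn_clm_comp π (fun _ _ ↦ rfl) hγ)
      (isIntegralCurveOn_clm_comp π (fun _ _ ↦ rfl) hδ) h₀
  exact sub_eq_sub_of_isIntegralCurveOn (convex_Ici t₀) hγ hδ
    (fun r hr ↦ congrArg (g r) (hπ hr)) self_mem_Ici ht

end IntegralCurves

theorem in_cluster_pair_safe_general {A B : Type*} [NormedAddCommGroup A] [NormedSpace ℝ A]
    [NormedAddCommGroup B] [NormedSpace ℝ B] {g : ℝ → B → A × B} {K : ℝ≥0} {t₀ : ℝ}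
    (hg : ∀ t ≥ t₀, LipschitzWith K fun b ↦ (g t b).2) {xi xj : ℝ → A × B}
    (hxi : IsIntegralCurveOn xi (fun t x ↦ g t x.2) (Ici t₀))
    (hxj : IsIntegralCurveOn xj (fun t x ↦ g t x.2) (Ici t₀))
    {danger : Set A} (hinit : (xi t₀).1 - (xj t₀).1 ∉ danger) (hb₀ : (xi t₀).2 = (xj t₀).2) :
    ∀ t ≥ t₀, (xi t).1 - (xj t).1 ∉ danger := by
  intro t ht
  have hrel : xi t - xj t = xi t₀ - xj t₀ :=
    sub_eq_sub_of_isIntegralCurveOn_factor (ContinuousLinearMap.snd ℝ A B) hg hxi hxj hb₀ ht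
  rwa [← Prod.fst_sub, hrel, Prod.fst_sub]

/-- Theorem 1 of the paper: two vehicles with dynamics depending only on the
`b`-component of the state, applying the same control, that start outside each
other's danger zone (measured by the norm `d` on the `a`-components) and with
equal `b`-components, remain outside each other's danger zone for all time. -/
theorem in_cluster_pair_safe (na nb : ℕ)
    (d : Seminorm ℝ (Fin na → ℝ)) (hd : ∀ z : Fin na → ℝ, d z = 0 → z = 0)
    (F : (Fin na → ℝ) × (Fin nb → ℝ) → ℝ → (Fin na → ℝ) × (Fin nb → ℝ))
    (G : (Fin nb → ℝ) → ℝ → (Fin na → ℝ) × (Fin nb → ℝ))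
    (hFG : ∀ (xa : Fin na → ℝ) (xb : Fin nb → ℝ) (t : ℝ), F (xa, xb) t = G xb t)
    (L : NNReal)
    (hLip : ∀ t : ℝ, LipschitzWith L fun xb => (G xb t).2)
    (hCont : ∀ xb : Fin nb → ℝ, Continuous fun t => (G xb t).2)
    (R : ℝ) (hR : 0 < R)
    (t0 : ℝ)
    (xi xj : ℝ → (Fin na → ℝ) × (Fin nb → ℝ))
    (hxi : ∀ t ≥ t0, HasDerivAt xi (F (xi t) t) t)
    (hxj : ∀ t ≥ t0, HasDerivAt xj (F (xj t) t) t)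
    (hinit : d ((xi t0).1 - (xj t0).1) > R)
    (hb0 : (xi t0).2 = (xj t0).2) :
    ∀ t ≥ t0, d ((xi t).1 - (xj t).1) > R := by
  have hcurve {x : ℝ → (Fin na → ℝ) × (Fin nb → ℝ)}
      (hx : ∀ t ≥ t0, HasDerivAt x (F (x t) t) t) :
      IsIntegralCurveOn x (fun t y ↦ G y.2 t) (Ici t0) :=
    fun t ht ↦ (hx t ht).hasDerivWithinAt.congr_deriv (hFG _ _ t)
  exact fun t ht ↦ not_le.1 <| in_cluster_pair_safe_general (danger := {z | d z ≤ R})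
    (fun t _ ↦ hLip t) (hcurve hxi) (hcurve hxj) hinit.not_ge hb0 t ht
end

section
/- Consider six $\{0,1\}$-valued variables $p_{12}, p_{13}, p_{21}, p_{23}, p_{31}, p_{32}$ subject to the pairwise constraints $p_{12} + p_{21} \le 1$, $p_{13} + p_{31} \le 1$, $p_{23} + p_{32} \le 1$ and the row constraints $p_{12} + p_{13} \le 1$, $p_{21} + p_{23} \le 1$, $p_{31} + p_{32} \le 1$ (the feasible set of the three-vehicle ILP), and real coefficients $c_{12}, c_{13}, c_{21}, c_{23}, c_{31}, c_{32}$. Suppose $c_{12} > c_{13}^+ + c_{21}^+ + c_{32}^+$, $c_{23} > c_{13}^+ + c_{21}^+ + c_{32}^+$, and $c_{31} > c_{13}^+ + c_{21}^+ + c_{32}^+$, where $r^+ = \max(r,0)$. Then every maximizer of the objective $\sum_{i \ne j} c_{ij} p_{ij}$ over the feasible set satisfies $p_{12} = p_{23} = p_{31} = 1$ and $p_{13} = p_{21} = p_{32} = 0$. -/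
/-- The feasible set of the three-vehicle ILP. -/
def ILPFeasible (p12 p13 p21 p23 p31 p32 : ℝ) : Prop :=
  (p12 = 0 ∨ p12 = 1) ∧ (p13 = 0 ∨ p13 = 1) ∧ (p21 = 0 ∨ p21 = 1) ∧
    (p23 = 0 ∨ p23 = 1) ∧ (p31 = 0 ∨ p31 = 1) ∧ (p32 = 0 ∨ p32 = 1) ∧
    p12 + p21 ≤ 1 ∧ p13 + p31 ≤ 1 ∧ p23 + p32 ≤ 1 ∧
    p12 + p13 ≤ 1 ∧ p21 + p23 ≤ 1 ∧ p31 + p32 ≤ 1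

/-- The linear objective of the three-vehicle ILP. -/
def ILPObj (c12 c13 c21 c23 c31 c32 p12 p13 p21 p23 p31 p32 : ℝ) : ℝ :=
  c12 * p12 + c13 * p13 + c21 * p21 + c23 * p23 + c31 * p31 + c32 * p32

/-! The objective splits into one term per vehicle, `c12 * p12 + c13 * p13` and its two analogues.
Under the row constraint of that vehicle, such a term has a unique maximizer as soon as the cyclic
coefficient exceeds the positive part of the other one. The three row maximizers together form the
cycle `1 → 2 → 3 → 1`, which also satisfies the pairwise constraints, so it is the unique
optimum. -/

section Row

variable {R : Type*} [CommRing R] [LinearOrder R] [IsStrictOrderedRing R] {a b x y : R}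

theorem mul_add_mul_le_of_add_le_one (hab : max b 0 ≤ a) (hy : 0 ≤ y) (hxy : x + y ≤ 1) :
    a * x + b * y ≤ a := by
  obtain ⟨hba, ha⟩ := max_le_iff.mp hab
  calc a * x + b * y ≤ a * x + a * y := by gcongr
    _ = a * (x + y) := (mul_add a x y).symm
    _ ≤ a := mul_le_of_le_one_right ha hxy

theorem eq_one_and_eq_zero_of_le_mul_add_mul (hab : max b 0 < a) (hy : 0 ≤ y)
    (hxy : x + y ≤ 1) (h : a ≤ a * x + b * y) : x = 1 ∧ y = 0 := by
  obtain ⟨hba, ha⟩ := max_lt_iff.mp hab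
  have hy0 : y = 0 := by
    refine (hy.eq_or_lt.resolve_right fun hpos ↦ h.not_gt ?_).symm
    calc a * x + b * y < a * x + a * y := by gcongr
      _ ≤ a := mul_add_mul_le_of_add_le_one (max_le le_rfl ha.le) hy hxy
  subst hy0
  have hx : 1 ≤ x := (le_mul_iff_one_le_right ha).mp (by simpa only [mul_zero, add_zero] using h)
  exact ⟨le_antisymm (by simpa only [add_zero] using hxy) hx, rfl⟩

end Row

/-- The relaxation of the three-vehicle ILP that keeps only the row constraints and, in place of
integrality, the nonnegativity of the variables off the cycle `1 → 2 → 3 → 1`. It contains the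
feasible sets of both the ILP and its linear programming relaxation. -/
structure ILPRowRelaxed (p12 p13 p21 p23 p31 p32 : ℝ) : Prop where
  nonneg13 : 0 ≤ p13
  nonneg21 : 0 ≤ p21
  nonneg32 : 0 ≤ p32
  row1 : p12 + p13 ≤ 1
  row2 : p21 + p23 ≤ 1
  row3 : p31 + p32 ≤ 1

theorem nonneg_of_eq_zero_or_eq_one {x : ℝ} (h : x = 0 ∨ x = 1) : 0 ≤ x := by
  rcases h with rfl | rfl
  exacts [le_rfl, zero_le_one]

theorem ILPFeasible.rowRelaxed {p12 p13 p21 p23 p31 p32 : ℝ}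
    (h : ILPFeasible p12 p13 p21 p23 p31 p32) : ILPRowRelaxed p12 p13 p21 p23 p31 p32 := by
  obtain ⟨-, h13, h21, -, -, h32, -, -, -, hrow1, hrow2, hrow3⟩ := h
  exact ⟨nonneg_of_eq_zero_or_eq_one h13, nonneg_of_eq_zero_or_eq_one h21,
    nonneg_of_eq_zero_or_eq_one h32, hrow1, hrow2, hrow3⟩

theorem ilpFeasible_cycle : ILPFeasible 1 0 0 1 1 0 := by
  norm_num [ILPFeasible]

theorem ilpObj_cycle (c12 c13 c21 c23 c31 c32 : ℝ) :
    ILPObj c12 c13 c21 c23 c31 c32 1 0 0 1 1 0 = c12 + c23 + c31 := by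
  simp [ILPObj]

theorem ILPRowRelaxed.eq_cycle_of_le_ilpObj {c12 c13 c21 c23 c31 c32 p12 p13 p21 p23 p31 p32 : ℝ}
    (hp : ILPRowRelaxed p12 p13 p21 p23 p31 p32)
    (hc12 : max c13 0 < c12) (hc23 : max c21 0 < c23) (hc31 : max c32 0 < c31)
    (hobj : c12 + c23 + c31 ≤ ILPObj c12 c13 c21 c23 c31 c32 p12 p13 p21 p23 p31 p32) :
    p12 = 1 ∧ p23 = 1 ∧ p31 = 1 ∧ p13 = 0 ∧ p21 = 0 ∧ p32 = 0 := by
  unfold ILPObj at hobj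
  have hrow2 : p23 + p21 ≤ 1 := (add_comm p23 p21).trans_le hp.row2
  have hle1 : c12 * p12 + c13 * p13 ≤ c12 :=
    mul_add_mul_le_of_add_le_one hc12.le hp.nonneg13 hp.row1
  have hle2 : c23 * p23 + c21 * p21 ≤ c23 :=
    mul_add_mul_le_of_add_le_one hc23.le hp.nonneg21 hrow2
  have hle3 : c31 * p31 + c32 * p32 ≤ c31 :=
    mul_add_mul_le_of_add_le_one hc31.le hp.nonneg32 hp.row3
  obtain ⟨h12, h13⟩ :=
    eq_one_and_eq_zero_of_le_mul_add_mul hc12 hp.nonneg13 hp.row1 (by linarith)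
  obtain ⟨h23, h21⟩ :=
    eq_one_and_eq_zero_of_le_mul_add_mul hc23 hp.nonneg21 hrow2 (by linarith)
  obtain ⟨h31, h32⟩ :=
    eq_one_and_eq_zero_of_le_mul_add_mul hc31 hp.nonneg32 hp.row3 (by linarith)
  exact ⟨h12, h23, h31, h13, h21, h32⟩

theorem ilp_all_conflicts_general {c12 c13 c21 c23 c31 c32 : ℝ}
    (hc12 : max c13 0 < c12) (hc23 : max c21 0 < c23) (hc31 : max c32 0 < c31)
    {p12 p13 p21 p23 p31 p32 : ℝ} (hp : ILPRowRelaxed p12 p13 p21 p23 p31 p32)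
    (hmax : ∀ q12 q13 q21 q23 q31 q32 : ℝ, ILPFeasible q12 q13 q21 q23 q31 q32 →
      ILPObj c12 c13 c21 c23 c31 c32 q12 q13 q21 q23 q31 q32 ≤
        ILPObj c12 c13 c21 c23 c31 c32 p12 p13 p21 p23 p31 p32) :
    p12 = 1 ∧ p23 = 1 ∧ p31 = 1 ∧ p13 = 0 ∧ p21 = 0 ∧ p32 = 0 :=
  hp.eq_cycle_of_le_ilpObj hc12 hc23 hc31 <|
    (ilpObj_cycle c12 c13 c21 c23 c31 c32).symm.trans_le <| hmax 1 0 0 1 1 0 ilpFeasible_cycle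

/-- Case of Theorem 3 in which all three pairs of vehicles are in potential conflict:
every maximizer of the ILP has `p12 = p23 = p31 = 1` and `p13 = p21 = p32 = 0`. -/
theorem ilp_all_conflicts (c12 c13 c21 c23 c31 c32 : ℝ)
    (hc12 : c12 > max c13 0 + max c21 0 + max c32 0)
    (hc23 : c23 > max c13 0 + max c21 0 + max c32 0)
    (hc31 : c31 > max c13 0 + max c21 0 + max c32 0)
    (p12 p13 p21 p23 p31 p32 : ℝ)
    (hfeas : ILPFeasible p12 p13 p21 p23 p31 p32)
    (hmax : ∀ q12 q13 q21 q23 q31 q32 : ℝ, ILPFeasible q12 q13 q21 q23 q31 q32 →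
      ILPObj c12 c13 c21 c23 c31 c32 q12 q13 q21 q23 q31 q32 ≤
        ILPObj c12 c13 c21 c23 c31 c32 p12 p13 p21 p23 p31 p32) :
    p12 = 1 ∧ p23 = 1 ∧ p31 = 1 ∧ p13 = 0 ∧ p21 = 0 ∧ p32 = 0 := by
  have h13 := le_max_right c13 0
  have h21 := le_max_right c21 0
  have h32 := le_max_right c32 0
  exact ilp_all_conflicts_general (by linarith) (by linarith) (by linarith) hfeas.rowRelaxed hmax
end

section
/- Consider six $\{0,1\}$-valued variables $p_{12}, p_{13}, p_{21}, p_{23}, p_{31}, p_{32}$ subject to the pairwise constraints $p_{12} + p_{21} \le 1$, $p_{13} + p_{31} \le 1$, $p_{23} + p_{32} \le 1$ and the row constraints $p_{12} + p_{13} \le 1$, $p_{21} + p_{23} \le 1$, $p_{31} + p_{32} \le 1$ (the feasible set of the three-vehicle ILP), and real coefficients $c_{12}, c_{13}, c_{21}, c_{23}, c_{31}, c_{32}$. Suppose $c_{12} > c_{13}^+ + c_{21}^+ + c_{32}^+$ and $c_{23} > c_{13}^+ + c_{21}^+ + c_{32}^+$, where $r^+ = \max(r,0)$, and suppose $c_{31}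 < 0$. Then every maximizer of the objective $\sum_{i \ne j} c_{ij} p_{ij}$ over the feasible set satisfies $p_{12} = 1$ and $p_{23} = 1$. -/
/-!
An exchange argument. Given a feasible point `p`, put `p12 = p23 = 1`, keep `p31`, and set the other
variables to zero. The result is again feasible, and passing to it gains `c12 * a + c23 * b`, where
`a = 1 - p12` and `b = 1 - p23`. The constraints give `p13 ≤ a`, `p32 ≤ b` and `p21 ≤ min a b`, so
it loses at most `c13⁺ * a + c32⁺ * b + c21⁺ * min a b`. This is less than the gain unless
`a = b = 0`, because `c13⁺ < c12`, `c32⁺ < c23` and `c13⁺ + c21⁺ + c32⁺ < c12 + c23`. The argument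
takes place in the LP relaxation.
-/

/-- The linear programming relaxation of the three-vehicle ILP: the variables are only required to
be nonnegative reals, the bounds `pij ≤ 1` being consequences of the pairwise constraints. -/
structure ILPRelaxed (p12 p13 p21 p23 p31 p32 : ℝ) : Prop where
  nonneg12 : 0 ≤ p12
  nonneg13 : 0 ≤ p13
  nonneg21 : 0 ≤ p21
  nonneg23 : 0 ≤ p23
  nonneg31 : 0 ≤ p31
  nonneg32 : 0 ≤ p32
  pair12 : p12 + p21 ≤ 1
  pair13 : p13 + p31 ≤ 1
  pair23 : p23 + p32 ≤ 1
  row1 : p12 + p13 ≤ 1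
  row2 : p21 + p23 ≤ 1
  row3 : p31 + p32 ≤ 1

section OrderedRing

variable {R : Type*} [Ring R] [LinearOrder R] [IsStrictOrderedRing R]

theorem mul_le_max_zero_mul {p t : R} (c : R) (hp : 0 ≤ p) (hpt : p ≤ t) :
    c * p ≤ max c 0 * t :=
  mul_le_mul (le_max_left c 0) hpt hp (le_max_right c 0)

theorem eq_zero_of_add_mul_le_mul_min {x y z a b : R} (hx : 0 < x) (hy : 0 < y) (hz : z < x + y)
    (ha : 0 ≤ a) (hb : 0 ≤ b) (h : x * a + y * b ≤ z * min a b) : a = 0 ∧ b = 0 := by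
  have hmin : min a b = 0 := by
    by_contra hne
    have hpos : 0 < min a b := (le_min ha hb).lt_of_ne' hne
    refine h.not_gt ?_
    calc
      z * min a b < (x + y) * min a b := mul_lt_mul_of_pos_right hz hpos
      _ = x * min a b + y * min a b := add_mul x y _
      _ ≤ x * a + y * b := by
        gcongr
        exacts [min_le_left a b, min_le_right a b]
  have hxa : 0 ≤ x * a := mul_nonneg hx.le ha
  have hyb : 0 ≤ y * b := mul_nonneg hy.le hb
  have hsum : x * a + y * b = 0 :=
    (h.trans_eq (by rw [hmin, mul_zero])).antisymm (add_nonneg hxa hyb)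
  obtain ⟨hxa0, hyb0⟩ := (add_eq_zero_iff_of_nonneg hxa hyb).1 hsum
  exact ⟨(mul_eq_zero_iff_left hx.ne').1 hxa0, (mul_eq_zero_iff_left hy.ne').1 hyb0⟩

end OrderedRing

section Exchange

variable {p12 p13 p21 p23 p31 p32 : ℝ}

theorem ILPFeasible.relaxed (hp : ILPFeasible p12 p13 p21 p23 p31 p32) :
    ILPRelaxed p12 p13 p21 p23 p31 p32 := by
  have nonneg_of_binary {t : ℝ} (ht : t = 0 ∨ t = 1) : 0 ≤ t := by
    rcases ht with rfl | rfl <;> norm_num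
  obtain ⟨h12, h13, h21, h23, h31, h32, pair12, pair13, pair23, row1, row2, row3⟩ := hp
  exact ⟨nonneg_of_binary h12, nonneg_of_binary h13, nonneg_of_binary h21, nonneg_of_binary h23,
    nonneg_of_binary h31, nonneg_of_binary h32, pair12, pair13, pair23, row1, row2, row3⟩

theorem ILPFeasible.exchange (hp : ILPFeasible p12 p13 p21 p23 p31 p32) :
    ILPFeasible 1 0 0 1 p31 0 := by
  obtain ⟨-, -, -, -, h31, -⟩ := hp
  rcases h31 with rfl | rfl <;> norm_num [ILPFeasible]

theorem ILPRelaxed.competing_value_le (hp : ILPRelaxed p12 p13 p21 p23 p31 p32)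
    (c13 c21 c32 : ℝ) :
    c13 * p13 + c21 * p21 + c32 * p32 ≤
      max c13 0 * (1 - p12) + max c21 0 * min (1 - p12) (1 - p23) + max c32 0 * (1 - p23) := by
  have h13 : p13 ≤ 1 - p12 := by linarith [hp.row1]
  have h21 : p21 ≤ min (1 - p12) (1 - p23) :=
    le_min (by linarith [hp.pair12]) (by linarith [hp.row2])
  have h32 : p32 ≤ 1 - p23 := by linarith [hp.pair23]
  exact add_le_add_three (mul_le_max_zero_mul c13 hp.nonneg13 h13)
    (mul_le_max_zero_mul c21 hp.nonneg21 h21) (mul_le_max_zero_mul c32 hp.nonneg32 h32)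

end Exchange

theorem ilp_two_conflicts_general (c12 c13 c21 c23 c31 c32 : ℝ)
    (hc12 : max c13 0 < c12) (hc23 : max c32 0 < c23)
    (hsum : max c13 0 + max c21 0 + max c32 0 < c12 + c23)
    (p12 p13 p21 p23 p31 p32 : ℝ)
    (hp : ILPRelaxed p12 p13 p21 p23 p31 p32)
    (hexchange : ILPObj c12 c13 c21 c23 c31 c32 1 0 0 1 p31 0 ≤
      ILPObj c12 c13 c21 c23 c31 c32 p12 p13 p21 p23 p31 p32) :
    p12 = 1 ∧ p23 = 1 := by
  have h12 : 0 ≤ 1 - p12 := by linarith [hp.nonneg13, hp.row1]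
  have h23 : 0 ≤ 1 - p23 := by linarith [hp.nonneg32, hp.pair23]
  have hgain : c12 * (1 - p12) + c23 * (1 - p23) ≤ c13 * p13 + c21 * p21 + c32 * p32 := by
    unfold ILPObj at hexchange
    linarith
  have hbalance : (c12 - max c13 0) * (1 - p12) + (c23 - max c32 0) * (1 - p23) ≤
      max c21 0 * min (1 - p12) (1 - p23) := by
    linarith [hp.competing_value_le c13 c21 c32]
  obtain ⟨h12_zero, h23_zero⟩ := eq_zero_of_add_mul_le_mul_min (sub_pos.2 hc12) (sub_pos.2 hc23)
    (by linarith) h12 h23 hbalance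
  exact ⟨(sub_eq_zero.1 h12_zero).symm, (sub_eq_zero.1 h23_zero).symm⟩

/-- Case of Theorem 3 in which exactly the pairs (1,2) and (2,3) are in potential
conflict: every maximizer of the ILP has `p12 = 1` and `p23 = 1`. -/
theorem ilp_two_conflicts (c12 c13 c21 c23 c31 c32 : ℝ)
    (hc12 : c12 > max c13 0 + max c21 0 + max c32 0)
    (hc23 : c23 > max c13 0 + max c21 0 + max c32 0)
    (hc31 : c31 < 0)
    (p12 p13 p21 p23 p31 p32 : ℝ)
    (hfeas : ILPFeasible p12 p13 p21 p23 p31 p32)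
    (hmax : ∀ q12 q13 q21 q23 q31 q32 : ℝ, ILPFeasible q12 q13 q21 q23 q31 q32 →
      ILPObj c12 c13 c21 c23 c31 c32 q12 q13 q21 q23 q31 q32 ≤
        ILPObj c12 c13 c21 c23 c31 c32 p12 p13 p21 p23 p31 p32) :
    p12 = 1 ∧ p23 = 1 := by
  have hpos (c : ℝ) : 0 ≤ max c 0 := le_max_right c 0
  exact ilp_two_conflicts_general c12 c13 c21 c23 c31 c32 (by linarith [hpos c21, hpos c32])
    (by linarith [hpos c13, hpos c21]) (by linarith [hpos c13, hpos c21, hpos c32])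
    p12 p13 p21 p23 p31 p32 hfeas.relaxed (hmax _ _ _ _ _ _ hfeas.exchange)
end

section
/- (Theorem 3 of the paper, combinatorial form.) Consider six $\{0,1\}$-valued variables $p_{12}, p_{13}, p_{21}, p_{23}, p_{31}, p_{32}$ subject to the pairwise constraints $p_{12} + p_{21} \le 1$, $p_{13} + p_{31} \le 1$, $p_{23} + p_{32} \le 1$ and the row constraints $p_{12} + p_{13} \le 1$, $p_{21} + p_{23} \le 1$, $p_{31} + p_{32} \le 1$ (the feasible set of the three-vehicle ILP). Let $b_{12}, b_{23}, b_{31}$ be Booleans indicating whether each of the vehicle pairs $(1,2)$, $(2,3)$, $(3,1)$ is in potential conflict, and let real coefficients $c_{ij}$ satisfy: $c_{12} > c_{13}^+ + c_{21}^+ + c_{32}^+$ if $b_{12}$ holds and $c_{12} = -1$ otherwise; $c_{23} > c_{13}^+ + c_{21}^+ + c_{32}^+$ if $b_{23}$ holds and $c_{23} = -1$ otherwise; $c_{31} > c_{13}^+ + c_{21}^+ + c_{32}^+$ if $b_{31}$ holds and $c_{31} = -1$ otherwise, where $r^+ = \max(r,0)$. Then every maximizer $p^*$ of $\sum_{i \ne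 j} c_{ij} p_{ij}$ over the feasible set satisfies: $b_{12} \Rightarrow p^*_{12} = 1$, $b_{23} \Rightarrow p^*_{23} = 1$, and $b_{31} \Rightarrow p^*_{31} = 1$. -/
/-!
The variables `p12, p23, p31` form a directed cycle: no constraint involves two of them, so any
zero-one values are feasible once `p13 = p21 = p32 = 0`. If a maximizer had `p12 = 0`, then
dropping `p13, p21, p32` and setting `p12 = 1` would cost at most the positive parts of their
coefficients and gain `c12`, which is larger.
-/

open scoped Matrix

/-- Zero-one vectors, the decision vectors of a binary integer program. -/
def IsBinary {ι R : Type*} [Zero R] [One R] (p : ι → R) : Prop :=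
  ∀ i, p i = 0 ∨ p i = 1

section BinaryProgram

variable {ι R : Type*} {p : ι → R}

theorem IsBinary.indicator [Zero R] [One R] (hp : IsBinary p) (s : Set ι) :
    IsBinary (s.indicator p) := by
  intro i
  by_cases hi : i ∈ s
  · simpa only [Set.indicator_of_mem hi] using hp i
  · exact Or.inl (Set.indicator_of_notMem hi p)

theorem IsBinary.add_single_one [DecidableEq ι] [AddZeroClass R] [One R] (hp : IsBinary p)
    {k : ι} (hk : p k = 0) : IsBinary (p + Pi.single k 1) := by
  intro i
  rcases eq_or_ne i k with rfl | hik
  · exact Or.inr (by rw [Pi.add_apply, hk, Pi.single_eq_same, zero_add])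
  · simpa only [Pi.add_apply, Pi.single_eq_of_ne hik, add_zero] using hp i

theorem IsBinary.mul_le_max_zero [MulZeroOneClass R] [LinearOrder R] (hp : IsBinary p)
    (a : R) (i : ι) : a * p i ≤ max a 0 := by
  rcases hp i with h | h
  · simp only [h, mul_zero, le_max_right]
  · simp only [h, mul_one, le_max_left]

variable [Fintype ι] [DecidableEq ι]

theorem IsBinary.dotProduct_le_indicator_add_sum_compl [NonAssocSemiring R] [LinearOrder R]
    [IsOrderedAddMonoid R] (hp : IsBinary p) (c : ι → R) (s : Finset ι) :
    c ⬝ᵥ p ≤ c ⬝ᵥ (s : Set ι).indicator p + ∑ i ∈ sᶜ, max (c i) 0 := by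
  have sum_eq : c ⬝ᵥ (s : Set ι).indicator p = ∑ i ∈ s, c i * p i := by
    simp only [dotProduct, Set.indicator_apply, Finset.mem_coe, mul_ite, mul_zero,
      Finset.sum_ite_mem, Finset.univ_inter]
  calc c ⬝ᵥ p = ∑ i ∈ s, c i * p i + ∑ i ∈ sᶜ, c i * p i :=
        (Finset.sum_add_sum_compl s _).symm
    _ ≤ c ⬝ᵥ (s : Set ι).indicator p + ∑ i ∈ sᶜ, max (c i) 0 := by
        rw [sum_eq]
        gcongr
        exact hp.mul_le_max_zero _ _

theorem IsBinary.eq_one_of_sum_compl_lt [NonAssocSemiring R] [LinearOrder R]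
    [IsOrderedCancelAddMonoid R] (hp : IsBinary p) {c : ι → R} {s : Finset ι}
    (hmax : ∀ q, IsBinary q → (∀ i ∉ s, q i = 0) → c ⬝ᵥ q ≤ c ⬝ᵥ p)
    {k : ι} (hks : k ∈ s) (hck : ∑ i ∈ sᶜ, max (c i) 0 < c k) : p k = 1 := by
  refine (hp k).resolve_left fun hpk ↦ ?_
  let r := (s : Set ι).indicator p
  have hrk : r k = 0 := (Set.indicator_of_mem hks p).trans hpk
  let q : ι → R := r + Pi.single k 1
  have supported : ∀ i ∉ s, q i = 0 := by
    intro i hi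
    have hik : i ≠ k := fun h ↦ hi (h ▸ hks)
    simp only [q, Pi.add_apply, Pi.single_eq_of_ne hik, add_zero]
    exact Set.indicator_of_notMem hi p
  have improves : c ⬝ᵥ p < c ⬝ᵥ q :=
    calc c ⬝ᵥ p ≤ c ⬝ᵥ r + ∑ i ∈ sᶜ, max (c i) 0 :=
          hp.dotProduct_le_indicator_add_sum_compl c s
      _ < c ⬝ᵥ r + c k := by gcongr
      _ = c ⬝ᵥ q := by rw [dotProduct_add, dotProduct_single_one]
  exact improves.not_ge (hmax q ((hp.indicator _).add_single_one hrk) supported)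

end BinaryProgram

theorem ILPFeasible.of_cycle {x y z : ℝ} (hx : x = 0 ∨ x = 1) (hy : y = 0 ∨ y = 1)
    (hz : z = 0 ∨ z = 1) : ILPFeasible x 0 0 y z 0 := by
  rcases hx with rfl | rfl <;> rcases hy with rfl | rfl <;> rcases hz with rfl | rfl <;>
    norm_num [ILPFeasible]

theorem ILPFeasible.isBinary {p12 p13 p21 p23 p31 p32 : ℝ}
    (h : ILPFeasible p12 p13 p21 p23 p31 p32) : IsBinary ![p12, p13, p21, p23, p31, p32] := by
  obtain ⟨h12, h13, h21, h23, h31, h32, -⟩ := h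
  simpa [IsBinary, Fin.forall_fin_succ] using ⟨h12, h13, h21, h23, h31, h32⟩

theorem ILPObj_eq_dotProduct (c12 c13 c21 c23 c31 c32 : ℝ) (p : Fin 6 → ℝ) :
    ILPObj c12 c13 c21 c23 c31 c32 (p 0) (p 1) (p 2) (p 3) (p 4) (p 5) =
      ![c12, c13, c21, c23, c31, c32] ⬝ᵥ p := by
  simp [ILPObj, dotProduct, Fin.sum_univ_six]

theorem ilp_conflicting_pairs_avoid_general {c12 c13 c21 c23 c31 c32 : ℝ}
    {p12 p13 p21 p23 p31 p32 : ℝ} (hfeas : ILPFeasible p12 p13 p21 p23 p31 p32)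
    (hmax : ∀ q12 q13 q21 q23 q31 q32 : ℝ, ILPFeasible q12 q13 q21 q23 q31 q32 →
      ILPObj c12 c13 c21 c23 c31 c32 q12 q13 q21 q23 q31 q32 ≤
        ILPObj c12 c13 c21 c23 c31 c32 p12 p13 p21 p23 p31 p32) :
    (max c13 0 + max c21 0 + max c32 0 < c12 → p12 = 1) ∧
      (max c13 0 + max c21 0 + max c32 0 < c23 → p23 = 1) ∧
      (max c13 0 + max c21 0 + max c32 0 < c31 → p31 = 1) := by
  let c := ![c12, c13, c21, c23, c31, c32]
  let p := ![p12, p13, p21, p23, p31, p32]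
  let cycle : Finset (Fin 6) := {0, 3, 4}
  have sum_compl : ∑ i ∈ cycleᶜ, max (c i) 0 = max c13 0 + max c21 0 + max c32 0 := by
    rw [show cycleᶜ = {1, 2, 5} by decide]
    simp [c, add_assoc]
  have optimal : ∀ q, IsBinary q → (∀ i ∉ cycle, q i = 0) → c ⬝ᵥ q ≤ c ⬝ᵥ p := by
    intro q hq hq0
    have feasible : ILPFeasible (q 0) (q 1) (q 2) (q 3) (q 4) (q 5) := by
      rw [hq0 1 (by decide), hq0 2 (by decide), hq0 5 (by decide)]
      exact .of_cycle (hq 0) (hq 3) (hq 4)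
    simpa only [ILPObj_eq_dotProduct] using
      (hmax _ _ _ _ _ _ feasible).trans_eq (ILPObj_eq_dotProduct _ _ _ _ _ _ p)
  have eq_one {k : Fin 6} (hk : k ∈ cycle)
      (hck : max c13 0 + max c21 0 + max c32 0 < c k) : p k = 1 :=
    hfeas.isBinary.eq_one_of_sum_compl_lt optimal hk (sum_compl.trans_lt hck)
  exact ⟨eq_one (k := 0) (by decide), eq_one (k := 3) (by decide), eq_one (k := 4) (by decide)⟩

/-- Theorem 3 of the paper (combinatorial form): with coefficients chosen according
to which pairs are in potential conflict, every maximizer of the three-vehicle ILP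
sets `p_ij = 1` for each conflicting pair. -/
theorem ilp_conflicting_pairs_avoid (b12 b23 b31 : Bool) (c12 c13 c21 c23 c31 c32 : ℝ)
    (hc12 : b12 = true → c12 > max c13 0 + max c21 0 + max c32 0)
    (hc12' : b12 = false → c12 = -1)
    (hc23 : b23 = true → c23 > max c13 0 + max c21 0 + max c32 0)
    (hc23' : b23 = false → c23 = -1)
    (hc31 : b31 = true → c31 > max c13 0 + max c21 0 + max c32 0)
    (hc31' : b31 = false → c31 = -1)
    (p12 p13 p21 p23 p31 p32 : ℝ)
    (hfeas : ILPFeasible p12 p13 p21 p23 p31 p32)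
    (hmax : ∀ q12 q13 q21 q23 q31 q32 : ℝ, ILPFeasible q12 q13 q21 q23 q31 q32 →
      ILPObj c12 c13 c21 c23 c31 c32 q12 q13 q21 q23 q31 q32 ≤
        ILPObj c12 c13 c21 c23 c31 c32 p12 p13 p21 p23 p31 p32) :
    (b12 = true → p12 = 1) ∧ (b23 = true → p23 = 1) ∧ (b31 = true → p31 = 1) := by
  obtain ⟨h12, h23, h31⟩ := ilp_conflicting_pairs_avoid_general hfeas hmax
  exact ⟨h12 ∘ hc12, h23 ∘ hc23, h31 ∘ hc31⟩
end

section
/- Let $n_a, n_b$ be natural numbers, $d$ a norm on $\mathbb{R}^{n_a}$, and $F$ a time-dependent vector field on $\mathbb{R}^{n_a} \times \mathbb{R}^{n_b}$ depending only on the $b$-component (i.e. $F((x_a,x_b),t) = G(x_b,t)$ with $x_b \mapsto (G(x_b,t))_b$ Lipschitz uniformly in $t$ and continuous in $t$). Let $x_1, \dots, x_m : \mathbb{R} \to \mathbb{R}^{n_a} \times \mathbb{R}^{n_b}$ all be solutions of $\dot{x}(t) = F(x(t),t)$ on $[t_0, \infty)$ (all vehicles in a cluster applying the same control), with pairwise equal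 initial $b$-components $(x_i(t_0))_b = (x_j(t_0))_b$ for all $i,j$, and pairwise initial safety $d\big((x_i(t_0))_a - (x_j(t_0))_a\big) > R_{ij}$ for all $i \ne j$, where $R_{ij} = R_{ji} > 0$. Then every pair of vehicles in the cluster remains safe for all time: $d\big((x_i(t))_a - (x_j(t))_a\big) > R_{ij}$ for all $i \ne j$ and all $t \ge t_0$. -/
/-!
Vehicles whose `b`-components agree initially solve the same Lipschitz equation for that component,
so by uniqueness the `b`-components agree forever. The velocities of the `a`-components, being
functions of the `b`-component and time, then also agree, so the relative position of two vehicles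
never changes, and neither does its norm.
-/

open Set
open scoped NNReal

section Prod

variable {𝕜 E F : Type*} [NontriviallyNormedField 𝕜] [NormedAddCommGroup E] [NormedSpace 𝕜 E]
  [NormedAddCommGroup F] [NormedSpace 𝕜 F] {g : 𝕜 → E × F} {g' : E × F} {s : Set 𝕜} {t : 𝕜}

lemma hasDerivWithinAt_prod_fst (hg : HasDerivWithinAt g g' s t) :
    HasDerivWithinAt (fun r ↦ (g r).1) g'.1 s t :=
  (ContinuousLinearMap.fst 𝕜 E F).hasFDerivAt.comp_hasDerivWithinAt t hg

lemma hasDerivWithinAt_prod_snd (hg : HasDerivWithinAt g g' s t) :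
    HasDerivWithinAt (fun r ↦ (g r).2) g'.2 s t :=
  (ContinuousLinearMap.snd 𝕜 E F).hasFDerivAt.comp_hasDerivWithinAt t hg

end Prod

section IntegralCurve

variable {E : Type*} [NormedAddCommGroup E] [NormedSpace ℝ E] {v : ℝ → E → E} {γ γ' : ℝ → E}
  {a b : ℝ}

lemma hasDerivWithinAt_Ici_of_isIntegralCurveOn_Icc (hγ : IsIntegralCurveOn γ v (Icc a b)) {t : ℝ}
    (ht : t ∈ Ico a b) : HasDerivWithinAt γ (v t (γ t)) (Ici t) t :=
  (hγ t (Ico_subset_Icc_self ht)).mono_of_mem_nhdsWithin (Icc_mem_nhdsGE_of_mem ht)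

lemma eqOn_Icc_of_isIntegralCurveOn {K : ℝ≥0} (hv : ∀ t ∈ Ico a b, LipschitzWith K (v t))
    (hγ : IsIntegralCurveOn γ v (Icc a b)) (hγ' : IsIntegralCurveOn γ' v (Icc a b))
    (ha : γ a = γ' a) : EqOn γ γ' (Icc a b) :=
  ODE_solution_unique_of_mem_Icc_right (s := fun _ ↦ univ) (fun t ht ↦ (hv t ht).lipschitzOnWith)
    hγ.continuousOn (fun _ ↦ hasDerivWithinAt_Ici_of_isIntegralCurveOn_Icc hγ)
    (fun _ _ ↦ mem_univ _)
    hγ'.continuousOn (fun _ ↦ hasDerivWithinAt_Ici_of_isIntegralCurveOn_Icc hγ')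
    (fun _ _ ↦ mem_univ _) ha

end IntegralCurve

section DependsOnlyOnSnd

variable {A B : Type*} [NormedAddCommGroup A] [NormedSpace ℝ A] [NormedAddCommGroup B]
  [NormedSpace ℝ B] {f : ℝ → B → A × B}

lemma isIntegralCurveOn_snd {γ : ℝ → A × B} {s : Set ℝ}
    (hγ : IsIntegralCurveOn γ (fun t z ↦ f t z.2) s) :
    IsIntegralCurveOn (fun t ↦ (γ t).2) (fun t y ↦ (f t y).2) s :=
  fun t ht ↦ hasDerivWithinAt_prod_snd (hγ t ht)

lemma fst_sub_fst_eq_of_isIntegralCurveOn {K : ℝ≥0} {a b : ℝ} {γ γ' : ℝ → A × B}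
    (hf : ∀ t ∈ Ico a b, LipschitzWith K fun y ↦ (f t y).2)
    (hγ : IsIntegralCurveOn γ (fun t z ↦ f t z.2) (Icc a b))
    (hγ' : IsIntegralCurveOn γ' (fun t z ↦ f t z.2) (Icc a b))
    (ha : (γ a).2 = (γ' a).2) {t : ℝ} (ht : t ∈ Icc a b) :
    (γ t).1 - (γ' t).1 = (γ a).1 - (γ' a).1 := by
  have snd_eq : EqOn (fun s ↦ (γ s).2) (fun s ↦ (γ' s).2) (Icc a b) :=
    eqOn_Icc_of_isIntegralCurveOn hf (isIntegralCurveOn_snd hγ) (isIntegralCurveOn_snd hγ') ha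
  have deriv_zero : ∀ s ∈ Ico a b, HasDerivWithinAt (fun s ↦ (γ s).1 - (γ' s).1) 0 (Ici s) s := by
    intro s hs
    have velocity_eq : (f s (γ s).2).1 = (f s (γ' s).2).1 :=
      congrArg (fun y ↦ (f s y).1) (snd_eq (Ico_subset_Icc_self hs))
    rw [← sub_eq_zero.mpr velocity_eq]
    exact
      (hasDerivWithinAt_prod_fst (hasDerivWithinAt_Ici_of_isIntegralCurveOn_Icc hγ hs)).sub
        (hasDerivWithinAt_prod_fst (hasDerivWithinAt_Ici_of_isIntegralCurveOn_Icc hγ' hs))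
  exact constant_of_has_deriv_right_zero (hγ.continuousOn.fst.sub hγ'.continuousOn.fst)
    deriv_zero t ht

theorem cluster_pairwise_safe_general {ι : Type*} (d : A → ℝ) {K : ℝ≥0} {t₀ : ℝ}
    (hf : ∀ t ≥ t₀, LipschitzWith K fun y ↦ (f t y).2) {x : ι → ℝ → A × B}
    (hx : ∀ i, IsIntegralCurveOn (x i) (fun t z ↦ f t z.2) (Ici t₀)) {R : ι → ι → ℝ}
    (hb₀ : ∀ i j, (x i t₀).2 = (x j t₀).2)
    (hinit : Pairwise fun i j ↦ R i j < d ((x i t₀).1 - (x j t₀).1)) {t : ℝ} (ht : t₀ ≤ t) :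
    Pairwise fun i j ↦ R i j < d ((x i t).1 - (x j t).1) := by
  intro i j hij
  have relative_position_eq : (x i t).1 - (x j t).1 = (x i t₀).1 - (x j t₀).1 :=
    fst_sub_fst_eq_of_isIntegralCurveOn (fun s hs ↦ hf s hs.1) ((hx i).mono Icc_subset_Ici_self)
      ((hx j).mono Icc_subset_Ici_self) (hb₀ i j) (right_mem_Icc.mpr ht)
  rw [relative_position_eq]
  exact hinit hij

end DependsOnlyOnSnd

/-- In-cluster safety: if all vehicles of a cluster follow the same dynamics,
which depend only on the `b`-component of the state, start with pairwise equal
`b`-components, and start pairwise outside each other's danger zones, then every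
pair of vehicles in the cluster remains safe for all time. -/
theorem cluster_pairwise_safe (na nb m : ℕ)
    (d : Seminorm ℝ (Fin na → ℝ)) (hd : ∀ z : Fin na → ℝ, d z = 0 → z = 0)
    (F : (Fin na → ℝ) × (Fin nb → ℝ) → ℝ → (Fin na → ℝ) × (Fin nb → ℝ))
    (G : (Fin nb → ℝ) → ℝ → (Fin na → ℝ) × (Fin nb → ℝ))
    (hFG : ∀ (xa : Fin na → ℝ) (xb : Fin nb → ℝ) (t : ℝ), F (xa, xb) t = G xb t)
    (L : NNReal)
    (hLip : ∀ t : ℝ, LipschitzWith L fun xb => (G xb t).2)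
    (hCont : ∀ xb : Fin nb → ℝ, Continuous fun t => (G xb t).2)
    (t0 : ℝ)
    (x : Fin m → ℝ → (Fin na → ℝ) × (Fin nb → ℝ))
    (hx : ∀ i : Fin m, ∀ t ≥ t0, HasDerivAt (x i) (F (x i t) t) t)
    (R : Fin m → Fin m → ℝ)
    (hRpos : ∀ i j : Fin m, i ≠ j → 0 < R i j)
    (hRsymm : ∀ i j : Fin m, R i j = R j i)
    (hb0 : ∀ i j : Fin m, (x i t0).2 = (x j t0).2)
    (hinit : ∀ i j : Fin m, i ≠ j → d ((x i t0).1 - (x j t0).1) > R i j) :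
    ∀ i j : Fin m, i ≠ j → ∀ t ≥ t0, d ((x i t).1 - (x j t).1) > R i j := by
  have hcurve (i : Fin m) : IsIntegralCurveOn (x i) (fun t z ↦ G z.2 t) (Ici t0) := fun t ht ↦
    (hx i t ht).hasDerivWithinAt.congr_deriv (hFG (x i t).1 (x i t).2 t)
  intro i j hij t ht
  exact cluster_pairwise_safe_general d (fun t _ ↦ hLip t) hcurve hb0 hinit ht hij
end
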